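/- Let ρ be the Gaussian measure on ℝ^d with mean μ and covariance Σ = LLᵀ, realized as the law of μ + L·Z where the coordinates of Z are i.i.d. standard normal. Let H ∈ ℝ^{d'×d}, R ∈ ℝ^{d'×d'} symmetric positive definite, β ∈ ℝ^{d'}, and define the negative log-likelihood h(x) := (1/2)(Hx − β)ᵀ R⁻¹ (Hx − β) and the Kalman–Bucy vector field v(x) := −(1/2) Σ Hᵀ R⁻¹ (Hx + Hμ − 2β). Then the Kalman–Bucy field satisfies the kernel-mean-embedding matching equation for the quadratic kernel: for every y ∈ ℝ^d, −∫ ⟨∇_x k₂(y,x), v(x)⟩ dρ(x) = ∫ k₂(y,x) h(x) dρ(x) − ( ∫ k₂(y,x) dρ(x) )( ∫ h dρ ), where ∇_x k₂(y,x) = 2(⟨y,x⟩ + 1) y. -/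

import Mathlib

open MeasureTheory Matrix ProbabilityTheory

/-- The standard Gaussian measure on `ℝ^d`, with i.i.d. standard normal coordinates. -/
noncomputable def stdGaussianPi (d : ℕ) : Measure (Fin d → ℝ) :=
  Measure.pi fun _ : Fin d => gaussianReal 0 1

/-- The Gaussian random vector `X = μ + L·Z`, realizing `N(μ, LLᵀ)`. -/
noncomputable def gaussX {d : ℕ} (μ : Fin d → ℝ) (L : Matrix (Fin d) (Fin d) ℝ)
    (z : Fin d → ℝ) : Fin d → ℝ := μ + L.mulVec z

/-- The Gaussian negative log-likelihood `h(x) = (1/2)(Hx-β)ᵀR⁻¹(Hx-β)`. -/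
noncomputable def negLogLik {d d' : ℕ} (H : Matrix (Fin d') (Fin d) ℝ)
    (R : Matrix (Fin d') (Fin d') ℝ) (β : Fin d' → ℝ) (x : Fin d → ℝ) : ℝ :=
  (1 / 2) * ((H.mulVec x - β) ⬝ᵥ R⁻¹.mulVec (H.mulVec x - β))

/-- The Kalman–Bucy vector field `v(x) = -(1/2) Σ Hᵀ R⁻¹ (Hx + Hμ - 2β)`. -/
noncomputable def kalmanBucyField {d d' : ℕ} (μ : Fin d → ℝ) (S : Matrix (Fin d) (Fin d) ℝ)
    (H : Matrix (Fin d') (Fin d) ℝ) (R : Matrix (Fin d') (Fin d') ℝ) (β : Fin d' → ℝ)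
    (x : Fin d → ℝ) : Fin d → ℝ :=
  -((1 / 2 : ℝ) • (S * Hᵀ * R⁻¹).mulVec (H.mulVec x + H.mulVec μ - (2 : ℝ) • β))


theorem integral_pow_four_gaussianReal (m : ℝ) (v : NNReal) :
    ∫ x, x ^ 4 ∂gaussianReal m v = m ^ 4 + 6 * m ^ 2 * v + 3 * (v : ℝ) ^ 2 := by
  have h := iteratedDeriv_mgf_zero (X := id) (μ := gaussianReal m v) (by simp) 4
  have hstep (f f' : ℝ → ℝ) (hf : ∀ t, HasDerivAt f (f' t) t) :
      deriv (fun t => f t * Real.exp (m * t + v * t ^ 2 / 2)) =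
        fun t => (f' t + f t * (m + v * t)) * Real.exp (m * t + v * t ^ 2 / 2) := by
    ext t
    have he : HasDerivAt (fun t : ℝ => m * t + v * t ^ 2 / 2) (m + v * t) t := by
      convert! ((hasDerivAt_id t).const_mul m).add
        ((((hasDerivAt_id t).pow 2).const_mul (v : ℝ)).div_const 2) using 1
      simp; ring
    convert! ((hf t).mul he.exp).deriv using 1
    ring
  have h1 := hstep (fun _ => 1) (fun _ => 0) (fun t => hasDerivAt_const t _)
  have hl (t : ℝ) : HasDerivAt (fun t : ℝ => m + v * t) v t := by
    simpa using ((hasDerivAt_id t).const_mul (v : ℝ)).const_add m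
  have hp (k : ℕ) (t : ℝ) : HasDerivAt (fun t : ℝ => (m + v * t) ^ (k + 1))
      ((k + 1) * (m + v * t) ^ k * v) t := by
    convert! (hl t).pow (k + 1) using 1; simp
  have h2 := hstep (fun t => m + v * t) (fun _ => v) hl
  have h3 := hstep (fun t => v + (m + v * t) ^ 2) (fun t => 2 * (m + v * t) * v) (fun t => by
    simpa [one_add_one_eq_two] using (hp 1 t).const_add (v : ℝ))
  have h4 := hstep (fun t => 3 * v * (m + v * t) + (m + v * t) ^ 3)
    (fun t => 3 * v * v + 3 * (m + v * t) ^ 2 * v) (fun t => by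
    convert! ((hl t).const_mul (3 * v : ℝ)).add (hp 2 t) using 1; norm_num)
  rw [mgf_id_gaussianReal, iteratedDeriv_eq_iterate] at h
  simp only [Function.iterate_succ, Function.iterate_zero, Function.comp_apply, id_eq] at h
  simp only [one_mul] at h1
  rw [h1] at h
  simp only [zero_add] at h
  rw [h2] at h
  have e2 : (fun t : ℝ => ((v : ℝ) + (m + v * t) * (m + v * t)) * Real.exp (m * t + v * t ^ 2 / 2))
    = fun t => (v + (m + v * t) ^ 2) * Real.exp (m * t + v * t ^ 2 / 2) := by ext t; ring
  rw [e2, h3] at h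
  have e3 : (fun t : ℝ => (2 * (m + v * t) * v + (v + (m + v * t) ^ 2) * (m + v * t)) *
      Real.exp (m * t + v * t ^ 2 / 2))
    = fun t => (3 * v * (m + v * t) + (m + v * t) ^ 3) * Real.exp (m * t + v * t ^ 2 / 2) := by
      ext t; ring
  rw [e3, h4] at h
  simp at h
  rw [← h]
  ring

theorem hasLaw_dotProduct_add_stdGaussianPi {d : ℕ} (a : Fin d → ℝ) (s : ℝ) :
    HasLaw (fun z => a ⬝ᵥ z + s) (gaussianReal s (a ⬝ᵥ a).toNNReal) (stdGaussianPi d) := by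
  have h0 : HasLaw (fun z => a ⬝ᵥ z) (gaussianReal 0 (a ⬝ᵥ a).toNNReal) (stdGaussianPi d) := by
    refine ⟨Measurable.aemeasurable (by unfold dotProduct; fun_prop), ?_⟩
    have h := IsGaussian.map_eq_gaussianReal (μ := stdGaussian (EuclideanSpace ℝ (Fin d)))
      (innerSL ℝ (WithLp.toLp 2 a))
    rw [variance_dual_stdGaussian, integral_strongDual_stdGaussian, ← map_pi_eq_stdGaussian,
      Measure.map_map (by fun_prop) (by fun_prop), innerSL_apply_norm,
      ← real_inner_self_eq_norm_sq] at h
    convert! h using 2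
    · ext z; simp [PiLp.inner_apply, dotProduct, mul_comm]
  simpa using gaussianReal_add_const h0 s

theorem memLp_four_dotProduct_add {d : ℕ} (a : Fin d → ℝ) (s : ℝ) :
    MemLp (fun z => a ⬝ᵥ z + s) 4 (stdGaussianPi d) := by
  have h := hasLaw_dotProduct_add_stdGaussianPi a s
  have h' := memLp_id_gaussianReal' (μ := s) (v := (a ⬝ᵥ a).toNNReal) 4 (by simp)
  rw [← h.map_eq] at h'
  exact h'.comp_of_map h.aemeasurable

theorem dotProduct_self_nonneg_real {d : ℕ} (a : Fin d → ℝ) : 0 ≤ a ⬝ᵥ a :=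
  Finset.sum_nonneg fun i _ => mul_self_nonneg (a i)

theorem integral_dotProduct_add_pow_four {d : ℕ} (a : Fin d → ℝ) (s : ℝ) :
    ∫ z, (a ⬝ᵥ z + s) ^ 4 ∂stdGaussianPi d
      = s ^ 4 + 6 * s ^ 2 * (a ⬝ᵥ a) + 3 * (a ⬝ᵥ a) ^ 2 := by
  have h := (hasLaw_dotProduct_add_stdGaussianPi a s).integral_comp
    (f := fun x : ℝ => x ^ 4) (by fun_prop)
  simpa [Function.comp_def, integral_pow_four_gaussianReal,
    Real.coe_toNNReal _ (dotProduct_self_nonneg_real a)] using h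

theorem integral_dotProduct_add_sq {d : ℕ} (a : Fin d → ℝ) (s : ℝ) :
    ∫ z, (a ⬝ᵥ z + s) ^ 2 ∂stdGaussianPi d = s ^ 2 + a ⬝ᵥ a := by
  have h := hasLaw_dotProduct_add_stdGaussianPi a s
  have hc := h.integral_comp (f := fun x : ℝ => x ^ 2) (by fun_prop)
  have hv := variance_eq_sub (memLp_id_gaussianReal' (μ := s) (v := (a ⬝ᵥ a).toNNReal) 2 (by simp))
  simp only [variance_id_gaussianReal, integral_id_gaussianReal, Pi.pow_apply, id_eq,
    Real.coe_toNNReal _ (dotProduct_self_nonneg_real a)] at hv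
  simp only [Function.comp_def] at hc
  linarith

theorem memLp_two_dotProduct_add_mul {d : ℕ} (a b : Fin d → ℝ) (s t : ℝ) :
    MemLp (fun z => (a ⬝ᵥ z + s) * (b ⬝ᵥ z + t)) 2 (stdGaussianPi d) := by
  have : ENNReal.HolderTriple 4 4 2 := ⟨by
    rw [← two_mul, show (4 : ENNReal) = 2 * 2 by norm_num,
      ENNReal.mul_inv (by simp) (by simp), ← mul_assoc,
      ENNReal.mul_inv_cancel (by simp) (by simp), one_mul]⟩
  exact (memLp_four_dotProduct_add b t).mul' (memLp_four_dotProduct_add a s)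

instance isProbabilityMeasure_stdGaussianPi (d : ℕ) : IsProbabilityMeasure (stdGaussianPi d) := by
  unfold stdGaussianPi; infer_instance

theorem integrable_dotProduct_add_mul {d : ℕ} (a b : Fin d → ℝ) (s t : ℝ) :
    Integrable (fun z => (a ⬝ᵥ z + s) * (b ⬝ᵥ z + t)) (stdGaussianPi d) :=
  (memLp_two_dotProduct_add_mul a b s t).integrable (by simp)

theorem integrable_dotProduct_add_mul_four {d : ℕ} (a b c e : Fin d → ℝ) (s t u w : ℝ) :
    Integrable (fun z => (a ⬝ᵥ z + s) * (b ⬝ᵥ z + t) * ((c ⬝ᵥ z + u) * (e ⬝ᵥ z + w)))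
      (stdGaussianPi d) :=
  (memLp_two_dotProduct_add_mul a b s t).integrable_mul (memLp_two_dotProduct_add_mul c e u w)

theorem integral_dotProduct_add_mul {d : ℕ} (a b : Fin d → ℝ) (s t : ℝ) :
    ∫ z, (a ⬝ᵥ z + s) * (b ⬝ᵥ z + t) ∂stdGaussianPi d = s * t + a ⬝ᵥ b := by
  have hpt : ∀ z, (a ⬝ᵥ z + s) * (b ⬝ᵥ z + t)
      = (1 / 4) * (((a + b) ⬝ᵥ z + (s + t)) ^ 2 - ((a - b) ⬝ᵥ z + (s - t)) ^ 2) := fun z => by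
    rw [add_dotProduct, sub_dotProduct]; ring
  simp_rw [hpt]
  rw [integral_const_mul, integral_sub, integral_dotProduct_add_sq, integral_dotProduct_add_sq]
  · simp only [add_dotProduct, dotProduct_add, sub_dotProduct, dotProduct_sub,
      dotProduct_comm b a]
    ring
  all_goals simp_rw [pow_two]; exact integrable_dotProduct_add_mul _ _ _ _

theorem integral_dotProduct_add_sq_mul_sq {d : ℕ} (a b : Fin d → ℝ) (s t : ℝ) :
    ∫ z, (a ⬝ᵥ z + s) ^ 2 * (b ⬝ᵥ z + t) ^ 2 ∂stdGaussianPi d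
      = (s ^ 2 + a ⬝ᵥ a) * (t ^ 2 + b ⬝ᵥ b) + 2 * (a ⬝ᵥ b) ^ 2 + 4 * s * t * (a ⬝ᵥ b) := by
  have hpt : ∀ z, (a ⬝ᵥ z + s) ^ 2 * (b ⬝ᵥ z + t) ^ 2
      = (1 / 12) * (((a + b) ⬝ᵥ z + (s + t)) ^ 4 + ((a - b) ⬝ᵥ z + (s - t)) ^ 4
        - 2 * ((a ⬝ᵥ z + s) ^ 4 + (b ⬝ᵥ z + t) ^ 4)) := fun z => by
    rw [add_dotProduct, sub_dotProduct]; ring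
  have hi (a : Fin d → ℝ) (s : ℝ) :
      Integrable (fun z => (a ⬝ᵥ z + s) ^ 4) (stdGaussianPi d) := by
    convert! integrable_dotProduct_add_mul_four a a a a s s s s using 2
    ring
  simp_rw [hpt]
  rw [integral_const_mul, integral_sub (by fun_prop) (by fun_prop), integral_const_mul,
    integral_add (by fun_prop) (by fun_prop), integral_add (by fun_prop) (by fun_prop)]
  simp only [integral_dotProduct_add_pow_four]
  simp only [add_dotProduct, dotProduct_add, sub_dotProduct,
    dotProduct_sub, dotProduct_comm b a]
  ring

theorem integral_dotProduct_add_sq_mul {d : ℕ} (a b c : Fin d → ℝ) (s t u : ℝ) :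
    ∫ z, (a ⬝ᵥ z + s) ^ 2 * ((b ⬝ᵥ z + t) * (c ⬝ᵥ z + u)) ∂stdGaussianPi d
      = (s ^ 2 + a ⬝ᵥ a) * (t * u + b ⬝ᵥ c) + 2 * (a ⬝ᵥ b) * (a ⬝ᵥ c)
        + 2 * s * (t * (a ⬝ᵥ c) + u * (a ⬝ᵥ b)) := by
  have hpt : ∀ z, (a ⬝ᵥ z + s) ^ 2 * ((b ⬝ᵥ z + t) * (c ⬝ᵥ z + u))
      = (1 / 4) * ((a ⬝ᵥ z + s) ^ 2 * ((b + c) ⬝ᵥ z + (t + u)) ^ 2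
        - (a ⬝ᵥ z + s) ^ 2 * ((b - c) ⬝ᵥ z + (t - u)) ^ 2) := fun z => by
    rw [add_dotProduct, sub_dotProduct]; ring
  simp_rw [hpt]
  rw [integral_const_mul, integral_sub, integral_dotProduct_add_sq_mul_sq,
    integral_dotProduct_add_sq_mul_sq]
  · simp only [add_dotProduct, dotProduct_add, sub_dotProduct, dotProduct_sub,
      dotProduct_comm c b]
    ring
  all_goals simp_rw [pow_two]; exact integrable_dotProduct_add_mul_four _ _ _ _ _ _ _ _

theorem dotProduct_mulVec_eq_sum {m n : ℕ} (W : Matrix (Fin m) (Fin n) ℝ) (u : Fin m → ℝ)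
    (w : Fin n → ℝ) : u ⬝ᵥ W *ᵥ w = ∑ k, ∑ l, W k l * (u k * w l) := by
  simp only [dotProduct, mulVec, Finset.mul_sum]
  exact Finset.sum_congr rfl fun k _ => Finset.sum_congr rfl fun l _ => by ring

theorem dotProduct_gaussX {d : ℕ} (μ : Fin d → ℝ) (L : Matrix (Fin d) (Fin d) ℝ)
    (y z : Fin d → ℝ) : y ⬝ᵥ gaussX μ L z = (Lᵀ *ᵥ y) ⬝ᵥ z + y ⬝ᵥ μ := by
  rw [gaussX, dotProduct_add, dotProduct_mulVec, mulVec_transpose, add_comm]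

theorem mulVec_gaussX {d d' : ℕ} (μ : Fin d → ℝ) (L : Matrix (Fin d) (Fin d) ℝ)
    (H : Matrix (Fin d') (Fin d) ℝ) (z : Fin d → ℝ) (k : Fin d') :
    (H *ᵥ gaussX μ L z) k = (H * L) k ⬝ᵥ z + (H *ᵥ μ) k := by
  rw [gaussX, mulVec_add, mulVec_mulVec, Pi.add_apply, add_comm]
  rfl

theorem negLogLik_gaussX {d d' : ℕ} (μ : Fin d → ℝ) (L : Matrix (Fin d) (Fin d) ℝ)
    (H : Matrix (Fin d') (Fin d) ℝ) (R : Matrix (Fin d') (Fin d') ℝ) (β : Fin d' → ℝ)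
    (z : Fin d → ℝ) :
    negLogLik H R β (gaussX μ L z) = ∑ k, ∑ l, (1 / 2 * R⁻¹ k l) *
      (((H * L) k ⬝ᵥ z + (H *ᵥ μ - β) k) * ((H * L) l ⬝ᵥ z + (H *ᵥ μ - β) l)) := by
  simp only [negLogLik, dotProduct_mulVec_eq_sum, Pi.sub_apply, mulVec_gaussX, Finset.mul_sum]
  exact Finset.sum_congr rfl fun k _ => Finset.sum_congr rfl fun l _ => by ring

theorem dotProduct_kalmanBucyField_gaussX {d d' : ℕ} (μ : Fin d → ℝ)
    (L : Matrix (Fin d) (Fin d) ℝ) (H : Matrix (Fin d') (Fin d) ℝ)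
    (R : Matrix (Fin d') (Fin d') ℝ) (β : Fin d' → ℝ) (y z : Fin d → ℝ) :
    y ⬝ᵥ kalmanBucyField μ (L * Lᵀ) H R β (gaussX μ L z) =
      ∑ k, ∑ l, (-(1 / 2) * R⁻¹ k l * (Lᵀ *ᵥ y ⬝ᵥ (H * L) k)) *
        ((H * L) l ⬝ᵥ z + 2 * (H *ᵥ μ - β) l) := by
  have hv (w : Fin d' → ℝ) : y ⬝ᵥ (L * Lᵀ * Hᵀ * R⁻¹) *ᵥ w =
      ((H * L) *ᵥ (Lᵀ *ᵥ y)) ⬝ᵥ R⁻¹ *ᵥ w := by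
    rw [← mulVec_mulVec, dotProduct_mulVec, ← mulVec_transpose]
    simp only [transpose_mul, transpose_transpose, mulVec_mulVec, Matrix.mul_assoc]
  rw [kalmanBucyField, dotProduct_neg, dotProduct_smul, hv, dotProduct_mulVec_eq_sum, smul_eq_mul,
    ← neg_mul, Finset.mul_sum]
  refine Finset.sum_congr rfl fun k _ => ?_
  rw [Finset.mul_sum]
  refine Finset.sum_congr rfl fun l _ => ?_
  simp only [Pi.sub_apply, Pi.add_apply, Pi.smul_apply, smul_eq_mul, mulVec_gaussX]
  rw [show ((H * L) *ᵥ (Lᵀ *ᵥ y)) k = (Lᵀ *ᵥ y) ⬝ᵥ (H * L) k from dotProduct_comm _ _]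
  ring

theorem integral_sum_sum_const_mul {α ι κ : Type*} [Fintype ι] [Fintype κ] [MeasurableSpace α]
    {P : Measure α} (c : ι → κ → ℝ) {f : ι → κ → α → ℝ} (hf : ∀ k l, Integrable (f k l) P) :
    ∫ z, ∑ k, ∑ l, c k l * f k l z ∂P = ∑ k, ∑ l, c k l * ∫ z, f k l z ∂P := by
  rw [integral_finsetSum _ fun k _ => integrable_finsetSum _ fun l _ => (hf k l).const_mul _]
  refine Finset.sum_congr rfl fun k _ => ?_
  rw [integral_finsetSum _ fun l _ => (hf k l).const_mul _]
  simp only [integral_const_mul]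

/-- For a Gaussian measure `ρ = N(μ, Σ)` with `Σ = LLᵀ`, the Kalman–Bucy
field satisfies the KME matching equation for the quadratic kernel: for every `y`,
`-∫ ⟨∇_x k₂(y,x), v(x)⟩ dρ(x) = ∫ k₂(y,x) h(x) dρ(x) - (∫ k₂(y,x) dρ(x))(∫ h dρ)`,
where `∇_x k₂(y,x) = 2(⟨y,x⟩+1)y`. -/
theorem stmt15 {d d' : ℕ} (μ : Fin d → ℝ) (L : Matrix (Fin d) (Fin d) ℝ)
    (H : Matrix (Fin d') (Fin d) ℝ) (R : Matrix (Fin d') (Fin d') ℝ)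
    (hR : R.PosDef) (hRsymm : R.IsSymm) (β : Fin d' → ℝ) :
    ∀ y : Fin d → ℝ,
      -(∫ z, (2 * (y ⬝ᵥ gaussX μ L z + 1)) *
          (y ⬝ᵥ kalmanBucyField μ (L * Lᵀ) H R β (gaussX μ L z)) ∂(stdGaussianPi d))
      = (∫ z, (y ⬝ᵥ gaussX μ L z + 1) ^ 2 * negLogLik H R β (gaussX μ L z)
            ∂(stdGaussianPi d))
        - (∫ z, (y ⬝ᵥ gaussX μ L z + 1) ^ 2 ∂(stdGaussianPi d)) *
          (∫ z, negLogLik H R β (gaussX μ L z) ∂(stdGaussianPi d)) := by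
  intro y
  set b := Lᵀ *ᵥ y
  set c := y ⬝ᵥ μ + 1
  set A := H * L
  set m := H *ᵥ μ - β
  have hW (k l) : R⁻¹ l k = R⁻¹ k l := hRsymm.inv.apply k l
  have hy (z) : y ⬝ᵥ gaussX μ L z + 1 = b ⬝ᵥ z + c := by
    rw [dotProduct_gaussX, add_assoc]
  have hleft (z) : (2 * (b ⬝ᵥ z + c)) *
        (y ⬝ᵥ kalmanBucyField μ (L * Lᵀ) H R β (gaussX μ L z)) =
      ∑ k, ∑ l, (-(R⁻¹ k l) * (b ⬝ᵥ A k)) * ((b ⬝ᵥ z + c) * (A l ⬝ᵥ z + 2 * m l)) := by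
    rw [dotProduct_kalmanBucyField_gaussX]
    simp only [Finset.mul_sum]
    exact Finset.sum_congr rfl fun k _ => Finset.sum_congr rfl fun l _ => by ring
  have hright (z) : (b ⬝ᵥ z + c) ^ 2 * negLogLik H R β (gaussX μ L z) =
      ∑ k, ∑ l, (1 / 2 * R⁻¹ k l) *
        ((b ⬝ᵥ z + c) ^ 2 * ((A k ⬝ᵥ z + m k) * (A l ⬝ᵥ z + m l))) := by
    rw [negLogLik_gaussX]
    simp only [Finset.mul_sum]
    exact Finset.sum_congr rfl fun k _ => Finset.sum_congr rfl fun l _ => by ring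
  have hswap : ∑ k, ∑ l, R⁻¹ k l * (c * (m k * (b ⬝ᵥ A l))) =
      ∑ k, ∑ l, R⁻¹ k l * (c * (m l * (b ⬝ᵥ A k))) := by
    rw [Finset.sum_comm]
    simp only [hW]
  simp only [hy, hleft, hright]
  simp only [negLogLik_gaussX]
  rw [integral_sum_sum_const_mul (fun k l => -(R⁻¹ k l) * (b ⬝ᵥ A k))
      fun k l => integrable_dotProduct_add_mul b (A l) c (2 * m l),
    integral_sum_sum_const_mul (fun k l => 1 / 2 * R⁻¹ k l)
      fun k l => integrable_dotProduct_add_mul (A k) (A l) (m k) (m l),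
    integral_sum_sum_const_mul (fun k l => 1 / 2 * R⁻¹ k l)
      (f := fun k l z => (b ⬝ᵥ z + c) ^ 2 * ((A k ⬝ᵥ z + m k) * (A l ⬝ᵥ z + m l))) fun k l => by
      simp_rw [pow_two]; exact integrable_dotProduct_add_mul_four _ _ _ _ _ _ _ _]
  simp only [integral_dotProduct_add_mul, integral_dotProduct_add_sq_mul,
    integral_dotProduct_add_sq]
  rw [← sub_eq_zero, ← sub_eq_zero.mpr hswap.symm]
  simp only [Finset.mul_sum, ← Finset.sum_neg_distrib, ← Finset.sum_sub_distrib]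
  exact Finset.sum_congr rfl fun k _ => Finset.sum_congr rfl fun l _ => by ring
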